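/- Let φ : X → ℝ be a lower semicontinuous function and let z ∈ X. Then sup{ ψ(z) : ψ is S-subharmonic on X and continuous on X, ψ ≤ φ } = sup{ ψ(z) : ψ is S-subharmonic on X, ψ ≤ φ } = inf{ ∫_X φ dμ : μ ∈ J_z(S) }. -/

import Mathlib

/-!
The inequalities "continuous supremum ≤ supremum ≤ infimum" follow from monotonicity of the
integral. Since the members of `S` are continuous and `S`-subharmonic, the reverse inequality follows
from Edwards' theorem for the cone `S` itself: if `a` is real and no `u ∈ S` with `u ≤ φ` satisfies
`a ≤ u z`, then some Jensen measure `μ` at `z` has `∫ φ dμ ≤ a` (`exists_jensen_integral_le`).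

To obtain `μ`, consider in `C(X, ℝ)` the convex cone of all `b` that dominate
`u - u z + t (a - φ)` for some `u ∈ S` and `t ≥ 0`. The hypothesis on `a` says precisely that this
cone misses the open convex set of strictly negative functions: if `u - u z + t (a - φ) < 0`, then
`t > 0`, and `t⁻¹ (u - u z) + a` is a forbidden element of `S`. The Hahn–Banach functional
separating the two is nonnegative on the cone (`exists_functional`), hence positive, and the
Riesz–Markov–Kakutani theorem represents its normalisation by a probability measure `μ`.
Nonnegativity on the cone gives both the Jensen inequality for `S` and `∫ g dμ ≤ a` for every
continuous `g ≤ φ`. Applying the latter to Lipschitz functions `g k ≤ φ` converging pointwise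
to `φ` (`exists_continuous_approx`), Fatou's lemma yields `∫ φ dμ ≤ a`.
-/

open MeasureTheory Topology Filter
open scoped ENNReal

/-- The nonnegative part of an extended real number, as an element of `ℝ≥0∞`. -/
noncomputable def erealToENNReal (a : EReal) : ℝ≥0∞ :=
  if a = ⊤ then ⊤ else ENNReal.ofReal a.toReal

/-- The (upper) integral of a function with values in `[-∞, ∞]`, defined as the
difference of the lower integrals of its positive and negative parts. -/
noncomputable def erealIntegral {α : Type*} [MeasurableSpace α]
    (μ : Measure α) (u : α → EReal) : EReal :=
  ((∫⁻ x, erealToENNReal (u x) ∂μ : ℝ≥0∞) : EReal) -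
    ((∫⁻ x, erealToENNReal (-(u x)) ∂μ : ℝ≥0∞) : EReal)

/-- `μ` is a Jensen measure with barycenter `z` with respect to the family `S` of
(continuous real-valued) functions: a Borel probability measure such that
`u z ≤ ∫ u dμ` for every `u ∈ S`. -/
def IsJensenMeasure {α : Type*} [MeasurableSpace α]
    (S : Set (α → ℝ)) (z : α) (μ : Measure α) : Prop :=
  IsProbabilityMeasure μ ∧ ∀ u ∈ S, u z ≤ ∫ x, u x ∂μ

/-- A function `u : α → [-∞, ∞)` is `S`-subharmonic if it is upper semicontinuous
and satisfies `u z ≤ ∫ u dμ` for every `z` and every Jensen measure `μ` with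
barycenter `z` w.r.t. `S`. -/
def IsSSubharmonic {α : Type*} [TopologicalSpace α] [MeasurableSpace α]
    (S : Set (α → ℝ)) (u : α → EReal) : Prop :=
  UpperSemicontinuous u ∧ (∀ x, u x ≠ ⊤) ∧
    ∀ z : α, ∀ μ : Measure α, IsJensenMeasure S z μ → u z ≤ erealIntegral μ u

theorem erealIntegral_mono {α : Type*} [MeasurableSpace α] (μ : Measure α) {u v : α → EReal}
    (h : ∀ x, u x ≤ v x) : erealIntegral μ u ≤ erealIntegral μ v := by
  -- `erealToENNReal` unfolds to Mathlib's `EReal.toENNReal`.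
  refine EReal.sub_le_sub ?_ ?_
  · exact EReal.coe_ennreal_le_coe_ennreal_iff.2
      (lintegral_mono fun x => EReal.toENNReal_le_toENNReal (h x))
  · exact EReal.coe_ennreal_le_coe_ennreal_iff.2
      (lintegral_mono fun x => EReal.toENNReal_le_toENNReal (EReal.neg_le_neg_iff.2 (h x)))

theorem erealIntegral_coe {α : Type*} [MeasurableSpace α] (μ : Measure α) {f : α → ℝ}
    (hf : Integrable f μ) :
    erealIntegral μ (fun x => (f x : EReal)) = ((∫ x, f x ∂μ : ℝ) : EReal) := by
  have h1 : ∫⁻ x, ENNReal.ofReal (f x) ∂μ ≠ ⊤ := hf.lintegral_lt_top.ne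
  have h2 : ∫⁻ x, ENNReal.ofReal (-f x) ∂μ ≠ ⊤ := hf.neg.lintegral_lt_top.ne
  have e1 : ∀ r : ℝ, erealToENNReal (r : EReal) = ENNReal.ofReal r := fun r => by
    simp [erealToENNReal]
  have e2 : ∀ r : ℝ, erealToENNReal (-(r : EReal)) = ENNReal.ofReal (-r) := fun r => by
    rw [← EReal.coe_neg, e1]
  unfold erealIntegral
  simp only [e1, e2]
  rw [integral_eq_lintegral_pos_part_sub_lintegral_neg_part hf, EReal.coe_sub,
    EReal.coe_ennreal_toReal h1, EReal.coe_ennreal_toReal h2]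

/-- A real lower semicontinuous function on a compact metric space is bounded below and is the
pointwise limit of continuous minorants with the same lower bound. The minorants are the Lipschitz
regularisations `x ↦ inf_y (φ y + k * dist x y)`. -/
theorem exists_continuous_approx {α : Type*} [MetricSpace α] [CompactSpace α] [Nonempty α]
    {φ : α → ℝ} (hφ : LowerSemicontinuous φ) :
    ∃ (m : ℝ) (g : ℕ → α → ℝ), (∀ k, Continuous (g k)) ∧ (∀ k x, m ≤ g k x) ∧
      (∀ k x, g k x ≤ φ x) ∧ ∀ x, Tendsto (fun k => g k x) atTop (𝓝 (φ x)) := by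
  obtain ⟨m, hm⟩ := (hφ.lowerSemicontinuousOn Set.univ).bddBelow_of_isCompact isCompact_univ
  have hm : ∀ x, m ≤ φ x := fun x => hm ⟨x, trivial, rfl⟩
  have hk : ∀ (k : ℕ) (x y : α), 0 ≤ (k : ℝ) * dist x y := fun k x y => by positivity
  have hbdd : ∀ (k : ℕ) (x : α), BddBelow (Set.range fun y => φ y + k * dist x y) := by
    rintro k x
    refine ⟨m, ?_⟩
    rintro _ ⟨y, rfl⟩
    have := hm y
    have := hk k x y
    dsimp only
    linarith
  have hle : ∀ (k : ℕ) (x : α), (⨅ y, (φ y + k * dist x y)) ≤ φ x := fun k x => by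
    simpa using ciInf_le (hbdd k x) x
  refine ⟨m, fun k x => ⨅ y, (φ y + k * dist x y), fun k => ?_, fun k x => ?_, hle, fun x => ?_⟩
  · refine (LipschitzWith.of_le_add_mul (k : NNReal) fun x x' => ?_).continuous
    rw [← sub_le_iff_le_add]
    refine le_ciInf fun y => ?_
    rw [sub_le_iff_le_add]
    refine (ciInf_le (hbdd k x) y).trans ?_
    have h1 := mul_le_mul_of_nonneg_left (dist_triangle x x' y) (Nat.cast_nonneg (α := ℝ) k)
    simp only [NNReal.coe_natCast]
    linarith
  · refine le_ciInf fun y => ?_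
    have := hm y
    have := hk k x y
    linarith
  · refine tendsto_order.2 ⟨fun c hc => ?_, fun c hc => ?_⟩
    · obtain ⟨c', hcc', hc'⟩ := exists_between hc
      obtain ⟨δ, hδ, hball⟩ := Metric.eventually_nhds_iff.1 (hφ x c' hc')
      obtain ⟨N, hN⟩ := exists_nat_ge ((c' - m) / δ)
      filter_upwards [eventually_ge_atTop N] with k hNk
      refine hcc'.trans_le (le_ciInf fun y => ?_)
      rcases lt_or_ge (dist x y) δ with hd | hd
      · have := hball (y := y) (by rwa [dist_comm])
        have := hk k x y
        linarith
      · have h1 : (c' - m) / δ ≤ k := hN.trans (by exact_mod_cast hNk)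
        rw [div_le_iff₀ hδ] at h1
        have h2 := mul_le_mul_of_nonneg_left hd (Nat.cast_nonneg (α := ℝ) k)
        have := hm y
        linarith
    · exact Eventually.of_forall fun k => (hle k x).trans_lt hc

/-- The Hahn–Banach step: a linear functional on `C(α, ℝ)`, normalised at `1`, which is nonnegative
on every continuous function dominating some `u - u z + t (a - φ)` with `u ∈ S`, `t ≥ 0`. -/
theorem exists_functional {α : Type*} [MetricSpace α] [CompactSpace α]
    (S : Set (α → ℝ))
    (hconst : ∀ c : ℝ, (fun _ => c) ∈ S)
    (hadd : ∀ u ∈ S, ∀ v ∈ S, u + v ∈ S)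
    (hsmul : ∀ u ∈ S, ∀ t : ℝ, 0 ≤ t → t • u ∈ S)
    (φ : α → ℝ) (z : α) (a : ℝ)
    (ha : ∀ u ∈ S, (∀ x, u x ≤ φ x) → u z < a) :
    ∃ L : C(α, ℝ) →ₗ[ℝ] ℝ, L 1 = 1 ∧ ∀ b : C(α, ℝ), ∀ u ∈ S, ∀ t : ℝ, 0 ≤ t →
      (∀ x, u x - u z + t * (a - φ x) ≤ b x) → 0 ≤ L b := by
  let B : Set C(α, ℝ) :=
    {b | ∃ u ∈ S, ∃ t : ℝ, 0 ≤ t ∧ ∀ x, u x - u z + t * (a - φ x) ≤ b x}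
  let O : Set C(α, ℝ) := {b | ∀ x, b x < 0}
  have hOopen : IsOpen O := by
    have : O = {f : C(α, ℝ) | Set.MapsTo f Set.univ (Set.Iio 0)} := by
      ext f; simp [O, Set.MapsTo]
    rw [this]
    exact ContinuousMap.isOpen_setOfPred_mapsTo isCompact_univ isOpen_Iio
  have hOconv : Convex ℝ O := by
    refine convex_iff_forall_pos.2 fun f hf g hg p q hp hq _ x => ?_
    have h1 := mul_neg_of_pos_of_neg hp (hf x)
    have h2 := mul_neg_of_pos_of_neg hq (hg x)
    simpa using add_neg h1 h2
  have hBsmul : ∀ b ∈ B, ∀ r : ℝ, 0 ≤ r → r • b ∈ B := by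
    rintro b ⟨u, hu, t, ht, h⟩ r hr
    refine ⟨r • u, hsmul u hu r hr, r * t, by positivity, fun x => ?_⟩
    have := mul_le_mul_of_nonneg_left (h x) hr
    simp only [Pi.smul_apply, smul_eq_mul, ContinuousMap.smul_apply]
    linarith
  have hBadd : ∀ b ∈ B, ∀ b' ∈ B, b + b' ∈ B := by
    rintro b ⟨u, hu, t, ht, h⟩ b' ⟨u', hu', t', ht', h'⟩
    refine ⟨u + u', hadd u hu u' hu', t + t', by positivity, fun x => ?_⟩
    have h1 := h x
    have h2 := h' x
    simp only [Pi.add_apply, ContinuousMap.add_apply]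
    linarith
  have hBconv : Convex ℝ B := fun f hf g hg p q hp hq _ =>
    hBadd _ (hBsmul f hf p hp) _ (hBsmul g hg q hq)
  have hdisj : Disjoint O B := by
    rw [Set.disjoint_left]
    rintro b hb ⟨u, hu, t, ht, h⟩
    have hneg : ∀ x, u x - u z + t * (a - φ x) < 0 := fun x => (h x).trans_lt (hb x)
    rcases ht.eq_or_lt with rfl | htpos
    · simpa using hneg z
    · have hv := hadd _ (hsmul u hu t⁻¹ (by positivity)) _ (hconst (a - t⁻¹ * u z))
      refine absurd (ha _ hv fun x => ?_) ?_
      · have h1 := mul_neg_of_pos_of_neg (inv_pos.2 htpos) (hneg x)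
        have h2 : t⁻¹ * (u x - u z + t * (a - φ x)) =
            t⁻¹ * u x + (a - t⁻¹ * u z) - φ x := by
          field_simp
          ring
        simp only [Pi.add_apply, Pi.smul_apply, smul_eq_mul]
        linarith
      · simp
  obtain ⟨L, s, hLO, hLB⟩ := geometric_hahn_banach_open hOconv hOopen hBconv hdisj
  have h0 : (0 : C(α, ℝ)) ∈ B := ⟨_, hconst 0, 0, le_rfl, fun x => by simp⟩
  have hs0 : s ≤ 0 := by simpa using hLB 0 h0
  have h1pos : 0 < L 1 := by
    have : L (-1) < s := hLO _ fun x => by simp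
    rw [map_neg] at this
    linarith
  -- A linear functional bounded below on a cone is nonnegative there.
  have hLnn : ∀ b ∈ B, 0 ≤ L b := by
    intro b hb
    by_contra! hneg
    have h1 := hLB _ (hBsmul b hb ((s - 1) / L b)
      (div_nonneg_of_nonpos (by linarith) hneg.le))
    rw [map_smul, smul_eq_mul, div_mul_cancel₀ _ hneg.ne] at h1
    linarith
  refine ⟨(L 1)⁻¹ • (L : C(α, ℝ) →ₗ[ℝ] ℝ), ?_, fun b u hu t ht h => ?_⟩
  · simp [h1pos.ne']
  · have := hLnn b ⟨u, hu, t, ht, h⟩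
    simp only [LinearMap.smul_apply, smul_eq_mul, ContinuousLinearMap.coe_coe]
    positivity

/-- Riesz–Markov–Kakutani on a compact space, for functionals on `C(α, ℝ)` normalised at `1`. -/
theorem exists_probability_measure {α : Type*} [MetricSpace α] [CompactSpace α]
    [MeasurableSpace α] [BorelSpace α] (L : C(α, ℝ) →ₗ[ℝ] ℝ) (hL1 : L 1 = 1)
    (hL : ∀ f : C(α, ℝ), (∀ x, 0 ≤ f x) → 0 ≤ L f) :
    ∃ μ : Measure α, IsProbabilityMeasure μ ∧ ∀ f : C(α, ℝ), ∫ x, f x ∂μ = L f := by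
  let Λ₀ : CompactlySupportedContinuousMap α ℝ →ₗ[ℝ] ℝ :=
    { toFun := fun f => L f.toContinuousMap
      map_add' := fun f g => L.map_add f.toContinuousMap g.toContinuousMap
      map_smul' := fun c f => L.map_smul c f.toContinuousMap }
  let Λ : CompactlySupportedContinuousMap α ℝ →ₚ[ℝ] ℝ :=
    PositiveLinearMap.mk₀ Λ₀ fun f hf => hL _ fun x => hf x
  have hint : ∀ f : C(α, ℝ), ∫ x, f x ∂(RealRMK.rieszMeasure Λ) = L f := fun f =>
    RealRMK.integral_rieszMeasure Λ (CompactlySupportedContinuousMap.continuousMapEquiv f)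
  refine ⟨RealRMK.rieszMeasure Λ, ?_, hint⟩
  have h1 := hint 1
  simp only [ContinuousMap.one_apply, integral_const, smul_eq_mul, mul_one, hL1] at h1
  constructor
  rwa [measureReal_def, ENNReal.toReal_eq_one_iff] at h1

/-- Edwards' theorem for the cone `S` of continuous functions, in contrapositive form. -/
theorem exists_jensen_integral_le {α : Type*} [MetricSpace α] [CompactSpace α]
    [MeasurableSpace α] [BorelSpace α]
    (S : Set (α → ℝ)) (hS : ∀ f ∈ S, Continuous f)
    (hconst : ∀ c : ℝ, (fun _ => c) ∈ S)
    (hadd : ∀ u ∈ S, ∀ v ∈ S, u + v ∈ S)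
    (hsmul : ∀ u ∈ S, ∀ t : ℝ, 0 ≤ t → t • u ∈ S)
    (φ : α → ℝ) (hφ : LowerSemicontinuous φ) (z : α) (a : ℝ)
    (ha : ∀ u ∈ S, (∀ x, u x ≤ φ x) → u z < a) :
    ∃ μ : Measure α, IsJensenMeasure S z μ ∧ Integrable φ μ ∧ ∫ x, φ x ∂μ ≤ a := by
  obtain ⟨L, hL1, hL⟩ := exists_functional S hconst hadd hsmul φ z a ha
  obtain ⟨μ, hμ, hint⟩ := exists_probability_measure L hL1 fun f hf =>
    hL f _ (hconst 0) 0 le_rfl fun x => by simpa using hf x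
  have hcont : ∀ f : α → ℝ, Continuous f → Integrable f μ := fun f hf =>
    hf.integrable_of_hasCompactSupport (HasCompactSupport.of_compactSpace f)
  have hsubconst : ∀ f : α → ℝ, Integrable f μ → ∀ c : ℝ,
      ∫ x, (f x - c) ∂μ = ∫ x, f x ∂μ - c := fun f hf c => by
    rw [integral_sub hf (integrable_const c)]
    simp
  have hjensen : ∀ u ∈ S, u z ≤ ∫ x, u x ∂μ := fun u hu => by
    have h1 := hL ⟨fun x => u x - u z, (hS u hu).sub continuous_const⟩ u hu 0 le_rfl
      fun x => by simp
    rw [← hint] at h1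
    have h2 := hsubconst u (hcont u (hS u hu)) (u z)
    simp only [ContinuousMap.coe_mk] at h1
    linarith
  have hminor : ∀ g : α → ℝ, Continuous g → (∀ x, g x ≤ φ x) → ∫ x, g x ∂μ ≤ a := by
    intro g hg hle
    have h1 := hL ⟨fun x => -(g x - a), (hg.sub continuous_const).neg⟩ _ (hconst 0) 1 zero_le_one
      fun x => by have := hle x; simp; linarith
    rw [← hint] at h1
    have h2 := hsubconst g (hcont g hg) a
    simp only [ContinuousMap.coe_mk, integral_neg] at h1
    linarith
  have : Nonempty α := ⟨z⟩
  obtain ⟨m, g, hgc, hmg, hgφ, hlim⟩ := exists_continuous_approx hφ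
  have hmφ : ∀ x, 0 ≤ φ x - m := fun x => sub_nonneg.2 ((hmg 0 x).trans (hgφ 0 x))
  have hma : m ≤ a := by
    have := hminor (fun _ => m) continuous_const fun x => sub_nonneg.1 (hmφ x)
    simpa using this
  have hbound : ∫⁻ x, ENNReal.ofReal (φ x - m) ∂μ ≤ ENNReal.ofReal (a - m) := by
    have heq : ∀ x, ENNReal.ofReal (φ x - m) =
        liminf (fun k => ENNReal.ofReal (g k x - m)) atTop := fun x =>
      (((ENNReal.continuous_ofReal.tendsto _).comp ((hlim x).sub_const m)).liminf_eq).symm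
    simp_rw [heq]
    refine (lintegral_liminf_le fun k =>
      ENNReal.measurable_ofReal.comp ((hgc k).measurable.sub_const m)).trans ?_
    refine liminf_le_of_le (by isBoundedDefault) fun b hb => ?_
    obtain ⟨k, hk⟩ := hb.exists
    refine hk.trans ?_
    have h1 : ENNReal.ofReal (∫ x, (g k x - m) ∂μ) = ∫⁻ x, ENNReal.ofReal (g k x - m) ∂μ :=
      ofReal_integral_eq_lintegral_ofReal ((hcont _ (hgc k)).sub (integrable_const m))
        (Eventually.of_forall fun x => sub_nonneg.2 (hmg k x))
    rw [hsubconst _ (hcont _ (hgc k))] at h1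
    refine h1.symm.le.trans ?_
    exact ENNReal.ofReal_le_ofReal (sub_le_sub_right (hminor _ (hgc k) (hgφ k)) m)
  have hint' : Integrable (fun x => φ x - m) μ := by
    refine (lintegral_ofReal_ne_top_iff_integrable
      (hφ.measurable.sub_const m).aestronglyMeasurable (Eventually.of_forall hmφ)).1 ?_
    exact (hbound.trans_lt ENNReal.ofReal_lt_top).ne
  have hintφ : Integrable φ μ := 
    (hint'.add (integrable_const m)).congr (Eventually.of_forall fun x => sub_add_cancel _ _)
  refine ⟨μ, ⟨hμ, hjensen⟩, hintφ, ?_⟩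
  rw [← ofReal_integral_eq_lintegral_ofReal hint' (Eventually.of_forall hmφ),
    ENNReal.ofReal_le_ofReal_iff (sub_nonneg.2 hma), hsubconst φ hintφ] at hbound
  linarith

theorem isSSubharmonic_of_mem {α : Type*} [MetricSpace α] [CompactSpace α]
    [MeasurableSpace α] [BorelSpace α] {S : Set (α → ℝ)} (hS : ∀ f ∈ S, Continuous f)
    {u : α → ℝ} (hu : u ∈ S) : IsSSubharmonic S (fun x => (u x : EReal)) := by
  refine ⟨(continuous_coe_real_ereal.comp (hS u hu)).upperSemicontinuous,
    fun x => EReal.coe_ne_top _, fun w μ hμ => ?_⟩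
  have := hμ.1
  rw [erealIntegral_coe μ
    ((hS u hu).integrable_of_hasCompactSupport (HasCompactSupport.of_compactSpace u))]
  exact EReal.coe_le_coe_iff.2 (hμ.2 u hu)

/-- Edwards' duality for `S`-subharmonic envelopes: for lower semicontinuous
`φ : X → ℝ` and `z ∈ X`, the supremum of `ψ z` over continuous `S`-subharmonic
`ψ ≤ φ` equals the supremum over all `S`-subharmonic `ψ ≤ φ`, and both equal
`inf { ∫ φ dμ : μ ∈ J_z(S) }`. -/
theorem edwards_duality_subharmonic {n : ℕ}
    (X : Set (Fin n → ℂ)) (hX : IsCompact X)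
    (S : Set (↥X → ℝ)) (hS : ∀ f ∈ S, Continuous f)
    (hconst : ∀ c : ℝ, (fun _ => c) ∈ S)
    (hadd : ∀ u ∈ S, ∀ v ∈ S, u + v ∈ S)
    (hsmul : ∀ u ∈ S, ∀ t : ℝ, 0 ≤ t → t • u ∈ S)
    (hmax : ∀ u ∈ S, ∀ v ∈ S, (fun x => max (u x) (v x)) ∈ S)
    (φ : ↥X → ℝ) (hφ : LowerSemicontinuous φ) (z : ↥X) :
    sSup {y : EReal | ∃ ψ : ↥X → EReal, IsSSubharmonic S ψ ∧ Continuous ψ ∧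
        (∀ x, ψ x ≤ ((φ x : ℝ) : EReal)) ∧ y = ψ z} =
      sSup {y : EReal | ∃ ψ : ↥X → EReal, IsSSubharmonic S ψ ∧
        (∀ x, ψ x ≤ ((φ x : ℝ) : EReal)) ∧ y = ψ z} ∧
    sSup {y : EReal | ∃ ψ : ↥X → EReal, IsSSubharmonic S ψ ∧
        (∀ x, ψ x ≤ ((φ x : ℝ) : EReal)) ∧ y = ψ z} =
      sInf {y : EReal | ∃ μ : Measure ↥X, IsJensenMeasure S z μ ∧
        y = erealIntegral μ (fun x => ((φ x : ℝ) : EReal))} := by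
  have : CompactSpace ↥X := isCompact_iff_compactSpace.1 hX
  have h12 : sSup {y : EReal | ∃ ψ : ↥X → EReal, IsSSubharmonic S ψ ∧ Continuous ψ ∧
        (∀ x, ψ x ≤ ((φ x : ℝ) : EReal)) ∧ y = ψ z} ≤
      sSup {y : EReal | ∃ ψ : ↥X → EReal, IsSSubharmonic S ψ ∧
        (∀ x, ψ x ≤ ((φ x : ℝ) : EReal)) ∧ y = ψ z} := by
    refine sSup_le_sSup ?_
    rintro y ⟨ψ, h1, -, h3, h4⟩
    exact ⟨ψ, h1, h3, h4⟩
  have h23 : sSup {y : EReal | ∃ ψ : ↥X → EReal, IsSSubharmonic S ψ ∧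
        (∀ x, ψ x ≤ ((φ x : ℝ) : EReal)) ∧ y = ψ z} ≤
      sInf {y : EReal | ∃ μ : Measure ↥X, IsJensenMeasure S z μ ∧
        y = erealIntegral μ (fun x => ((φ x : ℝ) : EReal))} := by
    refine sSup_le ?_
    rintro _ ⟨ψ, hψ, hle, rfl⟩
    refine le_sInf ?_
    rintro _ ⟨μ, hμ, rfl⟩
    exact (hψ.2.2 z μ hμ).trans (erealIntegral_mono μ hle)
  have h31 : sInf {y : EReal | ∃ μ : Measure ↥X, IsJensenMeasure S z μ ∧
        y = erealIntegral μ (fun x => ((φ x : ℝ) : EReal))} ≤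
      sSup {y : EReal | ∃ ψ : ↥X → EReal, IsSSubharmonic S ψ ∧ Continuous ψ ∧
        (∀ x, ψ x ≤ ((φ x : ℝ) : EReal)) ∧ y = ψ z} := by
    by_contra! hlt
    obtain ⟨a, ha1, ha2⟩ := EReal.lt_iff_exists_real_btwn.1 hlt
    obtain ⟨μ, hμ, hint, hle⟩ := exists_jensen_integral_le S hS hconst hadd hsmul φ hφ z a
      fun u hu hle => by
        refine EReal.coe_lt_coe_iff.1 (lt_of_le_of_lt (le_sSup ?_) ha1)
        exact ⟨fun x => (u x : EReal), isSSubharmonic_of_mem hS hu,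
          continuous_coe_real_ereal.comp (hS u hu), fun x => EReal.coe_le_coe_iff.2 (hle x), rfl⟩
    refine absurd (ha2.trans_le (sInf_le ⟨μ, hμ, rfl⟩)) (not_lt.2 ?_)
    rw [erealIntegral_coe μ hint]
    exact EReal.coe_le_coe_iff.2 hle
  exact ⟨le_antisymm h12 (h23.trans h31), le_antisymm h23 (h31.trans h12)⟩
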